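/- arXiv:2309.13180 — 2 statements merged into one kernel-verified Lean document; each statement's English description precedes it below -/
import Mathlib

section
/- Let G be a finite simple graph with no isolated vertices, let Γ_fec be the set of fractional edge covers of G, and let Γ_bfec ⊆ Γ_fec be the set of basic fractional edge covers. Then a density ρ ∈ ℝ^E_{≥0} is admissible for Γ_fec if and only if it is admissible for Γ_bfec; that is, Adm(Γ_fec) = Adm(Γ_bfec). -/
open Finset

noncomputable section
open scoped Classical

variable {V : Type*}

/-- The set of admissible densities for a family `Γ` of objects on the edge set of `G`.
Densities are elements of `ℝ^E_{≥0}`, modeled as nonnegative functions on `Sym2 V`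
vanishing outside the edge set of `G`. `ρ` is admissible if `ℓ_ρ(γ) ≥ 1` for all `γ ∈ Γ`. -/
def Adm [Fintype V] [DecidableEq V] (G : SimpleGraph V) (Γ : Set (Sym2 V → ℝ)) :
    Set (Sym2 V → ℝ) :=
  {ρ | (∀ e, 0 ≤ ρ e) ∧ (∀ e ∉ G.edgeSet, ρ e = 0) ∧
    ∀ γ ∈ Γ, 1 ≤ ∑ e ∈ G.edgeFinset, γ e * ρ e}

/-- The `p`-energy of a density `ρ` with edge weights `σ`: `Σ_e σ(e) ρ(e)^p`. -/
def energy [Fintype V] [DecidableEq V] (p : ℝ) (σ : Sym2 V → ℝ) (G : SimpleGraph V)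
    (ρ : Sym2 V → ℝ) : ℝ :=
  ∑ e ∈ G.edgeFinset, σ e * ρ e ^ p

/-- The `p`-modulus of a family `Γ` with edge weights `σ`:
the infimum of the `p`-energy over admissible densities. -/
def Modulus [Fintype V] [DecidableEq V] (p : ℝ) (σ : Sym2 V → ℝ) (G : SimpleGraph V)
    (Γ : Set (Sym2 V → ℝ)) : ℝ :=
  sInf (energy p σ G '' Adm G Γ)

/-- The unweighted 2-energy `Σ_e ρ(e)²`. -/
def energy2 [Fintype V] [DecidableEq V] (G : SimpleGraph V) (ρ : Sym2 V → ℝ) : ℝ :=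
  ∑ e ∈ G.edgeFinset, ρ e ^ 2

/-- The unweighted 2-modulus. -/
def Mod2 [Fintype V] [DecidableEq V] (G : SimpleGraph V) (Γ : Set (Sym2 V → ℝ)) : ℝ :=
  sInf (energy2 G '' Adm G Γ)

/-- `C` is an edge cover of `G`: a set of edges of `G` meeting every vertex. -/
def IsEdgeCover [Fintype V] [DecidableEq V] (G : SimpleGraph V) (C : Finset (Sym2 V)) : Prop :=
  ↑C ⊆ G.edgeSet ∧ ∀ v : V, ∃ e ∈ C, v ∈ e

/-- The family `Γ_ec` of indicator vectors of edge covers of `G`. -/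
def Γec [Fintype V] [DecidableEq V] (G : SimpleGraph V) : Set (Sym2 V → ℝ) :=
  {γ | ∃ C : Finset (Sym2 V), IsEdgeCover G C ∧ γ = fun e => if e ∈ C then 1 else 0}

/-- The family `Γ_fec` of fractional edge covers of `G`: nonnegative vectors on the edge
set with `Σ_{e ∈ δ(v)} γ(e) ≥ 1` at every vertex `v`. -/
def Γfec [Fintype V] [DecidableEq V] (G : SimpleGraph V) : Set (Sym2 V → ℝ) :=
  {γ | (∀ e, 0 ≤ γ e) ∧ (∀ e ∉ G.edgeSet, γ e = 0) ∧
    ∀ v : V, 1 ≤ ∑ e ∈ G.incidenceFinset v, γ e}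

/-- The family `Γ_star` of indicator vectors of the stars `δ(v)`, `v ∈ V`. -/
def Γstar [Fintype V] [DecidableEq V] (G : SimpleGraph V) : Set (Sym2 V → ℝ) :=
  {γ | ∃ v : V, γ = fun e => if e ∈ G.incidenceFinset v then 1 else 0}

/-- The subgraph of `G` whose edge set is the support `{e : γ(e) > 0}` of `γ`. -/
def suppGraph (G : SimpleGraph V) (γ : Sym2 V → ℝ) : SimpleGraph V where
  Adj u v := G.Adj u v ∧ 0 < γ s(u, v)
  symm := by
    constructor
    intro u v h
    refine ⟨h.1.symm, ?_⟩
    rw [Sym2.eq_swap]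
    exact h.2
  loopless := ⟨fun v h => G.loopless.irrefl v h.1⟩

/-- The connected component of `u` in `H` is a substar: all its edges share a common vertex. -/
def IsSubstarComponent (H : SimpleGraph V) (u : V) : Prop :=
  ∃ c : V, ∀ x y : V, H.Adj x y → H.Reachable u x → x = c ∨ y = c

/-- The connected component of `u` in `H` is a cycle of odd length. -/
def IsOddCycleComponent (H : SimpleGraph V) (u : V) : Prop :=
  ∃ (w : V) (c : H.Walk w w), c.IsCycle ∧ Odd c.length ∧ H.Reachable u w ∧
    ∀ x y : V, H.Adj x y → H.Reachable u x → s(x, y) ∈ c.edges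

/-- `γ` is a basic fractional edge cover of `G`: a fractional edge cover taking values
only in `{0, 1/2, 1}`, whose support is a vertex-disjoint union of odd cycles and
substars, with `γ(e) = 1/2` exactly on the edges lying on odd cycles of the support. -/
def IsBasicFEC [Fintype V] [DecidableEq V] (G : SimpleGraph V) (γ : Sym2 V → ℝ) : Prop :=
  γ ∈ Γfec G ∧
  (∀ e, γ e = 0 ∨ γ e = 1 / 2 ∨ γ e = 1) ∧
  (∀ u v : V, (suppGraph G γ).Adj u v →
    IsSubstarComponent (suppGraph G γ) u ∨ IsOddCycleComponent (suppGraph G γ) u) ∧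
  (∀ e ∈ G.edgeSet, (γ e = 1 / 2 ↔ ∃ (w : V) (c : (suppGraph G γ).Walk w w),
    c.IsCycle ∧ Odd c.length ∧ e ∈ c.edges))

/-- The family of basic fractional edge covers of `G`. -/
def Γbfec [Fintype V] [DecidableEq V] (G : SimpleGraph V) : Set (Sym2 V → ℝ) :=
  {γ | IsBasicFEC G γ}

/-!
The family `Γfec G` is a closed subset of the nonnegative orthant, so a nonnegative weight is
minimized over it at its extreme points, up to a perturbation making the weight positive; it
remains to see that an extreme point `γ` is basic. Call a vertex tight if the values of `γ` on its
edges sum up to `1`. By extremality, no nonzero vector supported on the support of `γ` has zero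
sums at all tight vertices. Hence every edge of the support has a tight end, and the fractional
edges are at most as many as the tight vertices on them. As each of these vertices lies on at least
two fractional edges, double counting shows that the fractional edges form disjoint cycles, which
are whole components of the support. Moving the fractional values towards `1/2` preserves the
tight sums, so they equal `1/2`, and alternating signs along a cycle exclude even length. An edge
of value at least `1` has value `1` and is pendant at its tight end, so the other components are
stars.
-/

open scoped Matrix Topology

section Convex

variable {ι : Type*} [Fintype ι] {K : Set (ι → ℝ)} {w : ι → ℝ} {c : ℝ}

lemma isCompact_setOf_dotProduct_le (hK : IsClosed K) (hK0 : ∀ x ∈ K, 0 ≤ x)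
    (hw : ∀ i, 0 < w i) : IsCompact {x ∈ K | w ⬝ᵥ x ≤ c} := by
  refine (isCompact_Icc (a := 0) (b := fun i => c / w i)).of_isClosed_subset
    (hK.inter (isClosed_le (continuous_const.dotProduct continuous_id) continuous_const)) ?_
  rintro x ⟨hxK, hxc⟩
  refine ⟨hK0 x hxK, fun i => (le_div_iff₀' (hw i)).2 (le_trans ?_ hxc)⟩
  exact single_le_sum (f := fun j => w j * x j)
    (fun j _ => mul_nonneg (hw j).le (hK0 x hxK j)) (mem_univ i)

/-- The minimizers of `w ⬝ᵥ ·` form a nonempty compact exposed face of `K`, which has an extreme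
point by the Krein–Milman lemma. -/
lemma exists_mem_extremePoints_dotProduct_le (hK : IsClosed K) (hK0 : ∀ x ∈ K, 0 ≤ x)
    (hw : ∀ i, 0 < w i) {x : ι → ℝ} (hx : x ∈ K) :
    ∃ y ∈ K.extremePoints ℝ, w ⬝ᵥ y ≤ w ⬝ᵥ x := by
  let l : StrongDual ℝ (ι → ℝ) := -(dotProductBilin ℝ ℝ w).toContinuousLinearMap
  have hl : ∀ y z, l y ≤ l z ↔ w ⬝ᵥ z ≤ w ⬝ᵥ y := fun y z => neg_le_neg_iff
  have hexposed : IsExposed ℝ K (l.toExposed K) := ContinuousLinearMap.toExposed.isExposed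
  have hslice : IsCompact {y ∈ K | w ⬝ᵥ y ≤ w ⬝ᵥ x} := isCompact_setOf_dotProduct_le hK hK0 hw
  have hface : ∀ y ∈ l.toExposed K, w ⬝ᵥ y ≤ w ⬝ᵥ x := fun y hy => (hl _ _).1 (hy.2 x hx)
  have hcompact : IsCompact (l.toExposed K) :=
    hslice.of_isClosed_subset (hexposed.isClosed hK) fun y hy => ⟨hy.1, hface y hy⟩
  obtain ⟨y, ⟨hyK, hyx⟩, hymin⟩ :=
    hslice.exists_isMinOn ⟨x, hx, le_rfl⟩ (f := fun y => w ⬝ᵥ y) (by fun_prop)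
  have hnonempty : (l.toExposed K).Nonempty := by
    refine ⟨y, hyK, fun z hz => (hl _ _).2 ?_⟩
    rcases le_total (w ⬝ᵥ z) (w ⬝ᵥ x) with hzx | hzx
    · exact hymin ⟨hz, hzx⟩
    · exact hyx.trans hzx
  obtain ⟨z, hz⟩ := hcompact.extremePoints_nonempty hnonempty
  exact ⟨z, hexposed.isExtreme.extremePoints_subset_extremePoints hz, hface z hz.1⟩

/-- Weights with zeros are handled by perturbing `w` to `w + ε`. -/
lemma le_dotProduct_of_forall_mem_extremePoints (hK : IsClosed K) (hK0 : ∀ x ∈ K, 0 ≤ x)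
    (hw : 0 ≤ w) (hc : ∀ y ∈ K.extremePoints ℝ, c ≤ w ⬝ᵥ y) {x : ι → ℝ} (hx : x ∈ K) :
    c ≤ w ⬝ᵥ x := by
  have hperturbed : ∀ ε : ℝ, 0 < ε → c ≤ (w + ε • 1) ⬝ᵥ x := fun ε hε => by
    obtain ⟨y, hy, hyx⟩ := exists_mem_extremePoints_dotProduct_le hK hK0
      (w := w + ε • 1) (fun i => add_pos_of_nonneg_of_pos (hw i) (by simpa)) hx
    refine (hc y hy).trans (le_trans ?_ hyx)
    exact dotProduct_le_dotProduct_of_nonneg_right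
      (le_add_of_nonneg_right (smul_nonneg hε.le zero_le_one)) (hK0 y hy.1)
  have hlim : Filter.Tendsto (fun ε : ℝ => (w + ε • 1) ⬝ᵥ x) (𝓝[>] 0) (𝓝 (w ⬝ᵥ x)) := by
    have hcont : Continuous fun ε : ℝ => (w + ε • 1) ⬝ᵥ x := by fun_prop
    simpa using (hcont.tendsto 0).mono_left nhdsWithin_le_nhds
  exact ge_of_tendsto hlim (eventually_mem_nhdsWithin.mono hperturbed)

end Convex

lemma eq_zero_of_eventually_add_smul_mem {E : Type*} [AddCommGroup E] [Module ℝ E] {K : Set E}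
    {x d : E} (hx : x ∈ K.extremePoints ℝ) (hd : ∀ᶠ t in 𝓝 (0 : ℝ), x + t • d ∈ K) : d = 0 := by
  have hneg : ∀ᶠ t in 𝓝 (0 : ℝ), x + (-t) • d ∈ K :=
    (continuous_neg.tendsto' (0 : ℝ) 0 neg_zero).eventually hd
  obtain ⟨t, ⟨hplus, hminus⟩, ht⟩ :=
    (((hd.and hneg).filter_mono nhdsWithin_le_nhds).and
      (eventually_mem_nhdsWithin (a := (0 : ℝ)) (s := Set.Ioi 0))).exists
  have hmid : x ∈ openSegment ℝ (x + t • d) (x + (-t) • d) :=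
    ⟨1 / 2, 1 / 2, by norm_num, by norm_num, by norm_num, by module⟩
  have hfix : x + t • d = x := hx.2 hplus hminus hmid
  exact (smul_eq_zero.1 (add_eq_left.1 hfix)).resolve_left ht.ne'

lemma eventually_le_add_mul {a x y : ℝ} (hax : a ≤ x) (hy : x = a → y = 0) :
    ∀ᶠ t in 𝓝 (0 : ℝ), a ≤ x + t * y := by
  rcases hax.eq_or_lt with rfl | hlt
  · simp [hy rfl]
  · have hcont : Continuous fun t : ℝ => x + t * y := by fun_prop
    exact ((hcont.tendsto' 0 x (by simp)).eventually_const_lt hlt).mono fun _ => le_of_lt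

lemma card_le_card_of_linearMap_restrict_injective {R ι κ : Type*} [Ring R]
    [StrongRankCondition R] (A : (ι → R) →ₗ[R] κ → R) {S : Finset ι} {T : Finset κ}
    (hA : ∀ d, (∀ i ∉ S, d i = 0) → (∀ k ∈ T, A d k = 0) → d = 0) : #S ≤ #T := by
  let B : (S → R) →ₗ[R] T → R :=
    LinearMap.funLeft R R Subtype.val ∘ₗ A ∘ₗ Function.ExtendByZero.linearMap R Subtype.val
  have hB : Function.Injective B := by
    refine LinearMap.ker_eq_bot.1 (LinearMap.ker_eq_bot'.2 fun f hf => ?_)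
    have hext : Function.extend Subtype.val f 0 = (0 : ι → R) := by
      refine hA _ (fun i hi => ?_) fun k hk => congrFun hf ⟨k, hk⟩
      exact Function.extend_apply' _ _ _ fun ⟨j, hj⟩ => hi (hj ▸ j.2)
    ext i
    rw [← Subtype.val_injective.extend_apply f 0 i, hext]
    rfl
  simpa using card_le_of_injective R B hB

section Graph

variable {G F H : SimpleGraph V}

lemma notMem_edges_of_isCycle_of_neighborSet_subset {x y : V} (hx : H.neighborSet x ⊆ {y})
    {w : V} {c : H.Walk w w} (hc : c.IsCycle) : s(x, y) ∉ c.edges := by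
  intro hmem
  have htwo := hc.ncard_neighborSet_toSubgraph_eq_two (c.fst_mem_support_of_mem_edges hmem)
  have hone := Set.ncard_le_ncard ((c.toSubgraph.neighborSet_subset x).trans hx)
  rw [Set.ncard_singleton] at hone
  omega

lemma isSubstarComponent_of_neighborSet_subset {a y : V}
    (hleaf : ∀ z ∈ H.neighborSet y, H.neighborSet z ⊆ {y}) (ha : H.Reachable y a) :
    IsSubstarComponent H a := by
  have hcomponent : ∀ z, H.Reachable y z → z = y ∨ H.Adj y z := fun z hz => by
    rw [SimpleGraph.reachable_iff_reflTransGen] at hz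
    induction hz with
    | refl => exact .inl rfl
    | tail _ hadj ih =>
      rcases ih with rfl | hy
      · exact .inr hadj
      · exact .inl (hleaf _ hy hadj)
  refine ⟨y, fun p q hpq hap => ?_⟩
  exact (hcomponent p (ha.trans hap)).imp_right fun hyp => hleaf p hyp hpq

lemma degree_eq_two_of_card_edgeFinset_le [Fintype V] [DecidableRel F.Adj] {T : Finset V}
    (hT : ∀ v ∈ T, 2 ≤ F.degree v) (hcard : #F.edgeFinset ≤ #T) {v : V} (hv : 0 < F.degree v) :
    v ∈ T ∧ F.degree v = 2 := by
  have hle : ∀ u ∈ univ, (if u ∈ T then 2 else 0) ≤ F.degree u := fun u _ => by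
    split_ifs with hu
    exacts [hT u hu, Nat.zero_le _]
  have hsum : ∑ u, F.degree u ≤ ∑ u, if u ∈ T then 2 else 0 := by
    rw [F.sum_degrees_eq_twice_card_edges, sum_ite_mem, univ_inter, sum_const, smul_eq_mul]
    omega
  have heq := (sum_eq_sum_iff_of_le hle).1 (le_antisymm (sum_le_sum hle) hsum) v (mem_univ v)
  split_ifs at heq with hvT
  · exact ⟨hvT, heq.symm⟩
  · omega

lemma reachable_and_nonempty_neighborSet_of_forall_adj
    (hclosed : ∀ ⦃x y z⦄, F.Adj x y → H.Adj x z → F.Adj x z) {u v x : V}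
    (huv : F.Adj u v) (hux : H.Reachable u x) :
    F.Reachable u x ∧ (F.neighborSet x).Nonempty := by
  obtain ⟨p⟩ := hux
  induction p generalizing v with
  | nil => exact ⟨.rfl, v, huv⟩
  | cons h _ ih =>
    have hstep := hclosed huv h
    exact (ih hstep.symm).imp_left hstep.reachable.trans

lemma exists_isCycle_edges_of_isCycles [Finite V] (hF : F.IsCycles) (hFH : F ≤ H)
    (hclosed : ∀ ⦃x y z⦄, F.Adj x y → H.Adj x z → F.Adj x z) {u v : V} (huv : F.Adj u v) :
    ∃ c : H.Walk u u, c.IsCycle ∧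
      ∀ x y, H.Adj x y → H.Reachable u x → s(x, y) ∈ c.edges := by
  have := Fintype.ofFinite V
  obtain ⟨c, hc, hverts⟩ := hF.exists_cycle_toSubgraph_verts_eq_connectedComponentSupp
    (c := F.connectedComponentMk u) (v := u) rfl ⟨v, huv⟩
  refine ⟨c.mapLe hFH, hc.mapLe hFH, fun x y hxy hux => ?_⟩
  obtain ⟨hreach, z, hxz⟩ := reachable_and_nonempty_neighborSet_of_forall_adj hclosed huv hux
  have hxc : x ∈ c.toSubgraph.verts := hverts ▸ SimpleGraph.ConnectedComponent.eq.2 hreach.symm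
  rw [SimpleGraph.Walk.edges_mapLe_eq_edges, ← SimpleGraph.Walk.adj_toSubgraph_iff_mem_edges,
    hc.adj_toSubgraph_iff_of_isCycles hF hxc]
  exact hclosed hxz hxy

/-- The vertex sums `Σ_{e ∈ δ(v)} γ(e)` in the covering constraints, as a linear map of `γ`. -/
def vertexSum [Fintype V] [DecidableEq V] (G : SimpleGraph V) : (Sym2 V → ℝ) →ₗ[ℝ] V → ℝ where
  toFun γ v := ∑ e ∈ G.incidenceFinset v, γ e
  map_add' _ _ := funext fun _ => sum_add_distrib
  map_smul' _ _ := funext fun _ => (mul_sum ..).symm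

/-- The vector alternating between `1` and `-1` along the edges of a walk, starting with `1`; along
an even cycle it has zero vertex sums. An edge traversed several times collects all its signs. -/
def alternatingVec [DecidableEq V] {u v : V} : G.Walk u v → Sym2 V → ℝ
  | .nil => 0
  | .cons (v := x) _ p => Pi.single s(u, x) 1 - alternatingVec p

lemma alternatingVec_of_notMem_edges [DecidableEq V] {u v : V} (p : G.Walk u v) {e : Sym2 V}
    (he : e ∉ p.edges) : alternatingVec p e = 0 := by
  induction p with
  | nil => rfl
  | cons h p ih =>
    rw [SimpleGraph.Walk.edges_cons, List.mem_cons, not_or] at he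
    simp [alternatingVec, he.1, ih he.2]

lemma alternatingVec_ne_zero [DecidableEq V] {w : V} {c : G.Walk w w} (hc : c.IsCycle) :
    alternatingVec c ≠ 0 := by
  cases c with
  | nil => exact absurd rfl hc.ne_nil
  | @cons _ x _ h p =>
    have hnotMem := ((SimpleGraph.Walk.cons_isCycle_iff p h).1 hc).2
    exact fun hzero => by
      simpa [alternatingVec, alternatingVec_of_notMem_edges p hnotMem] using congrFun hzero s(w, x)

variable [Fintype V] [DecidableEq V]

lemma vertexSum_apply (γ : Sym2 V → ℝ) (v : V) :
    vertexSum G γ v = ∑ e ∈ G.incidenceFinset v, γ e :=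
  rfl

lemma vertexSum_eq_vertexSum_of_le (hFG : F ≤ G) {γ : Sym2 V → ℝ}
    (hγ : ∀ e ∉ F.edgeSet, γ e = 0) : vertexSum G γ = vertexSum F γ := by
  ext v
  refine (sum_subset (fun e he => ?_) fun e heG heF => hγ e fun he => heF ?_).symm
  · rw [SimpleGraph.mem_incidenceFinset] at he ⊢
    exact he.imp_left fun h => SimpleGraph.edgeSet_mono hFG h
  · rw [SimpleGraph.mem_incidenceFinset] at heG ⊢
    exact ⟨he, heG.2⟩

lemma vertexSum_eq_zero_of_degree_eq_zero {v : V} (hv : G.degree v = 0) (γ : Sym2 V → ℝ) :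
    vertexSum G γ v = 0 := by
  rw [← G.card_incidenceFinset_eq_degree, card_eq_zero] at hv
  rw [vertexSum_apply, hv, sum_empty]

lemma vertexSum_single {u v : V} (huv : G.Adj u v) :
    vertexSum G (Pi.single s(u, v) 1) = Pi.single u 1 + Pi.single v 1 := by
  ext z
  have hmem : s(u, v) ∈ G.incidenceFinset z ↔ z = u ∨ z = v := by
    simp [SimpleGraph.mk'_mem_incidenceSet_iff, huv]
  have hne := huv.ne
  simp only [vertexSum_apply, Pi.add_apply, Pi.single_apply, sum_ite_eq', hmem]
  split_ifs <;> simp_all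

lemma vertexSum_alternatingVec {u v : V} (p : G.Walk u v) :
    vertexSum G (alternatingVec p) = Pi.single u 1 - (-1) ^ p.length • Pi.single v 1 := by
  induction p with
  | nil => simp [alternatingVec]
  | cons h p ih =>
    rw [alternatingVec, map_sub, vertexSum_single h, ih, SimpleGraph.Walk.length_cons, pow_succ]
    module

end Graph

section SupportGraph

variable {G : SimpleGraph V} {γ : Sym2 V → ℝ}

lemma suppGraph_le : suppGraph G γ ≤ G :=
  fun _ _ h => h.1

lemma mem_edgeSet_suppGraph {e : Sym2 V} :
    e ∈ (suppGraph G γ).edgeSet ↔ e ∈ G.edgeSet ∧ 0 < γ e := by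
  induction e with
  | _ x y => exact Iff.rfl

/-- The graph of fractional edges, those on which `γ` lies strictly between `0` and `1`; for an
extreme point `γ` it consists of the odd cycles of the support. -/
def fracGraph (G : SimpleGraph V) (γ : Sym2 V → ℝ) : SimpleGraph V :=
  (suppGraph G γ).deleteEdges {e | 1 ≤ γ e}

lemma fracGraph_le_suppGraph : fracGraph G γ ≤ suppGraph G γ :=
  SimpleGraph.deleteEdges_le _

lemma fracGraph_le : fracGraph G γ ≤ G :=
  fracGraph_le_suppGraph.trans suppGraph_le

lemma fracGraph_adj {x y : V} :
    (fracGraph G γ).Adj x y ↔ (suppGraph G γ).Adj x y ∧ γ s(x, y) < 1 := by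
  simp [fracGraph]

lemma mem_edgeSet_fracGraph {e : Sym2 V} :
    e ∈ (fracGraph G γ).edgeSet ↔ e ∈ G.edgeSet ∧ 0 < γ e ∧ γ e < 1 := by
  simp [fracGraph, mem_edgeSet_suppGraph, and_assoc]

end SupportGraph

section FractionalEdgeCover

variable [Fintype V] [DecidableEq V] {G : SimpleGraph V} {γ d : Sym2 V → ℝ} {x y z : V}

lemma isClosed_Γfec : IsClosed (Γfec G) := by
  simp only [Γfec, Set.ofPred_and, Set.ofPred_forall]
  refine .inter (isClosed_iInter fun e => ?_) (.inter ?_ (isClosed_iInter fun v => ?_))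
  · exact isClosed_le continuous_const (continuous_apply e)
  · exact isClosed_iInter fun e => isClosed_iInter fun _ =>
      isClosed_eq (continuous_apply e) continuous_const
  · exact isClosed_le continuous_const (by fun_prop)

lemma suppGraph_adj_of_pos (hγ : γ ∈ Γfec G) (hpos : 0 < γ s(x, y)) :
    (suppGraph G γ).Adj x y :=
  ⟨by_contra fun h => hpos.ne' (hγ.2.1 s(x, y) h), hpos⟩

lemma add_le_vertexSum (hγ : γ ∈ Γfec G) (hy : G.Adj x y) (hz : G.Adj x z) (hyz : y ≠ z) :
    γ s(x, y) + γ s(x, z) ≤ vertexSum G γ x := by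
  rw [← sum_pair (f := γ) (mt Sym2.congr_right.1 hyz)]
  refine sum_le_sum_of_subset_of_nonneg (fun e he => ?_) fun e _ _ => hγ.1 e
  rcases by simpa using he with rfl | rfl <;> simpa

/-- Small multiples of `d` violate neither the constraints tight at `γ` nor the slack ones. -/
lemma eq_zero_of_forall_vertexSum_eq_zero (hγ : γ ∈ (Γfec G).extremePoints ℝ)
    (hsupp : ∀ e, γ e = 0 → d e = 0)
    (htight : ∀ v, vertexSum G γ v = 1 → vertexSum G d v = 0) : d = 0 := by
  obtain ⟨hnonneg, hedge, hcover⟩ := hγ.1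
  refine eq_zero_of_eventually_add_smul_mem hγ ?_
  have hnonneg_add : ∀ᶠ t in 𝓝 (0 : ℝ), ∀ e, 0 ≤ γ e + t * d e :=
    Filter.eventually_all.2 fun e => eventually_le_add_mul (hnonneg e) (hsupp e)
  have hcover_add : ∀ᶠ t in 𝓝 (0 : ℝ), ∀ v, 1 ≤ vertexSum G γ v + t * vertexSum G d v :=
    Filter.eventually_all.2 fun v => eventually_le_add_mul (hcover v) (htight v)
  filter_upwards [hnonneg_add, hcover_add] with t ht0 ht1
  refine ⟨ht0, fun e he => ?_, fun v => ?_⟩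
  · simp [hedge e he, hsupp e (hedge e he)]
  · simpa [vertexSum_apply, sum_add_distrib, mul_sum] using ht1 v

/-- Otherwise the value of the edge could be perturbed on its own. -/
lemma vertexSum_eq_one_or_of_suppGraph_adj (hγ : γ ∈ (Γfec G).extremePoints ℝ)
    (hxy : (suppGraph G γ).Adj x y) : vertexSum G γ x = 1 ∨ vertexSum G γ y = 1 := by
  by_contra! hslack
  have hsingle : (Pi.single s(x, y) 1 : Sym2 V → ℝ) = 0 := by
    refine eq_zero_of_forall_vertexSum_eq_zero hγ (fun e he => ?_) fun v hv => ?_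
    · exact Pi.single_eq_of_ne (by rintro rfl; exact hxy.2.ne' he) 1
    · have hvx : v ≠ x := fun h => hslack.1 (h ▸ hv)
      have hvy : v ≠ y := fun h => hslack.2 (h ▸ hv)
      simp [vertexSum_single hxy.1, hvx, hvy]
  exact one_ne_zero (Pi.single_eq_zero_iff.1 hsingle)

lemma eq_one_and_neighborSet_subset_of_one_le (hγ : γ ∈ Γfec G) (hxy : (suppGraph G γ).Adj x y)
    (hone : 1 ≤ γ s(x, y)) (hx : vertexSum G γ x = 1) :
    γ s(x, y) = 1 ∧ (suppGraph G γ).neighborSet x ⊆ {y} := by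
  constructor
  · refine le_antisymm (hx ▸ ?_) hone
    exact single_le_sum (fun e _ => hγ.1 e) (by simpa using hxy.1)
  · intro z hz
    by_contra hzy
    have := add_le_vertexSum hγ hxy.1 hz.1 (Ne.symm hzy)
    linarith [hz.2]

lemma fracGraph_adj_or_eq_one (hγ : γ ∈ (Γfec G).extremePoints ℝ)
    (hxy : (suppGraph G γ).Adj x y) :
    (fracGraph G γ).Adj x y ∨ γ s(x, y) = 1 ∧
      ((suppGraph G γ).neighborSet x ⊆ {y} ∨ (suppGraph G γ).neighborSet y ⊆ {x}) := by
  rcases lt_or_ge (γ s(x, y)) 1 with hlt | hone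
  · exact .inl (fracGraph_adj.2 ⟨hxy, hlt⟩)
  · right
    rcases vertexSum_eq_one_or_of_suppGraph_adj hγ hxy with hx | hy
    · exact (eq_one_and_neighborSet_subset_of_one_le hγ.1 hxy hone hx).imp_right .inl
    · rw [Sym2.eq_swap] at hone ⊢
      exact (eq_one_and_neighborSet_subset_of_one_le hγ.1 hxy.symm hone hy).imp_right .inr

/-- By extremality, a vector on the fractional edges is determined by its sums at these vertices. -/
lemma card_edgeFinset_fracGraph_le (hγ : γ ∈ (Γfec G).extremePoints ℝ) :
    #(fracGraph G γ).edgeFinset ≤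
      #{v | vertexSum G γ v = 1 ∧ 0 < (fracGraph G γ).degree v} := by
  refine card_le_card_of_linearMap_restrict_injective (vertexSum G) fun d hd hsum => ?_
  have hd' : ∀ e ∉ (fracGraph G γ).edgeSet, d e = 0 := fun e he => hd e (by simpa using he)
  refine eq_zero_of_forall_vertexSum_eq_zero hγ (fun e he => ?_) fun v hv => ?_
  · exact hd' e fun h => (mem_edgeSet_fracGraph.1 h).2.1.ne' he
  · rcases Nat.eq_zero_or_pos ((fracGraph G γ).degree v) with hdeg | hdeg
    · rw [vertexSum_eq_vertexSum_of_le fracGraph_le hd',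
        vertexSum_eq_zero_of_degree_eq_zero hdeg]
    · exact hsum v (by simp [hv, hdeg])

lemma fracGraph_adj_of_vertexSum_eq_one (hγ : γ ∈ Γfec G) (hx : vertexSum G γ x = 1)
    (hxy : (fracGraph G γ).Adj x y) (hxz : (suppGraph G γ).Adj x z) :
    (fracGraph G γ).Adj x z := by
  obtain rfl | hyz := eq_or_ne y z
  · exact hxy
  · refine fracGraph_adj.2 ⟨hxz, ?_⟩
    have hpos := (fracGraph_adj.1 hxy).1.2
    have hsum := add_le_vertexSum hγ (fracGraph_le hxy) hxz.1 hyz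
    linarith

lemma vertexSum_fracGraph_eq_one (hγ : γ ∈ Γfec G) (hx : vertexSum G γ x = 1)
    (hxy : (fracGraph G γ).Adj x y) : vertexSum (fracGraph G γ) γ x = 1 := by
  rw [← hx]
  refine sum_subset (fun e he => ?_) fun e heG heF => ?_
  · rw [SimpleGraph.mem_incidenceFinset] at he ⊢
    exact he.imp_left fun h => SimpleGraph.edgeSet_mono fracGraph_le h
  · obtain ⟨z, rfl⟩ := Sym2.mem_iff_exists.1 ((SimpleGraph.mem_incidenceFinset ..).1 heG).2
    by_contra hne
    have hpos : 0 < γ s(x, z) := lt_of_le_of_ne' (hγ.1 _) hne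
    have hxz := fracGraph_adj_of_vertexSum_eq_one hγ hx hxy (suppGraph_adj_of_pos hγ hpos)
    exact heF (by simpa using hxz)

/-- The values on the fractional edges at a tight vertex are less than `1` and sum up to `1`. -/
lemma two_le_degree_fracGraph (hγ : γ ∈ Γfec G) (hx : vertexSum G γ x = 1)
    (hdeg : 0 < (fracGraph G γ).degree x) : 2 ≤ (fracGraph G γ).degree x := by
  obtain ⟨y, hxy⟩ := ((fracGraph G γ).degree_pos_iff_exists_adj x).1 hdeg
  have hlt : vertexSum (fracGraph G γ) γ x < (fracGraph G γ).degree x := by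
    rw [← SimpleGraph.card_incidenceFinset_eq_degree, ← nsmul_one, ← sum_const, vertexSum_apply]
    refine sum_lt_sum_of_nonempty ⟨s(x, y), by simpa using hxy⟩ fun e he => ?_
    exact (mem_edgeSet_fracGraph.1 ((SimpleGraph.mem_incidenceFinset ..).1 he).1).2.2
  rw [vertexSum_fracGraph_eq_one hγ hx hxy] at hlt
  exact_mod_cast hlt

lemma vertexSum_eq_one_and_degree_eq_two (hγ : γ ∈ (Γfec G).extremePoints ℝ)
    (hdeg : 0 < (fracGraph G γ).degree x) :
    vertexSum G γ x = 1 ∧ (fracGraph G γ).degree x = 2 := by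
  have htwo : ∀ v ∈ ({v | vertexSum G γ v = 1 ∧ 0 < (fracGraph G γ).degree v} : Finset V),
      2 ≤ (fracGraph G γ).degree v := fun v hv =>
    two_le_degree_fracGraph hγ.1 (mem_filter.1 hv).2.1 (mem_filter.1 hv).2.2
  exact (degree_eq_two_of_card_edgeFinset_le htwo (card_edgeFinset_fracGraph_le hγ) hdeg).imp_left
    fun hx => (mem_filter.1 hx).2.1

lemma fracGraph_adj_of_suppGraph_adj (hγ : γ ∈ (Γfec G).extremePoints ℝ)
    (hxy : (fracGraph G γ).Adj x y) (hxz : (suppGraph G γ).Adj x z) : (fracGraph G γ).Adj x z := by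
  have hdeg := ((fracGraph G γ).degree_pos_iff_exists_adj x).2 ⟨y, hxy⟩
  have hx := (vertexSum_eq_one_and_degree_eq_two hγ hdeg).1
  exact fracGraph_adj_of_vertexSum_eq_one hγ.1 hx hxy hxz

lemma fracGraph_isCycles (hγ : γ ∈ (Γfec G).extremePoints ℝ) : (fracGraph G γ).IsCycles := by
  intro v hv
  have hdeg := ((fracGraph G γ).degree_pos_iff_exists_adj v).2 hv
  rw [← (vertexSum_eq_one_and_degree_eq_two hγ hdeg).2, Set.ncard_eq_toFinset_card']
  rfl

/-- Moving the fractional values towards `1/2` changes no sum at a tight vertex. -/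
lemma eq_half_of_mem_edgeSet_fracGraph (hγ : γ ∈ (Γfec G).extremePoints ℝ) {e : Sym2 V}
    (he : e ∈ (fracGraph G γ).edgeSet) : γ e = 1 / 2 := by
  set F := fracGraph G γ
  let d : Sym2 V → ℝ := F.edgeSet.indicator fun e => γ e - 1 / 2
  have hd : ∀ e ∉ F.edgeSet, d e = 0 := fun e he => Set.indicator_of_notMem he _
  have hzero : d = 0 := by
    refine eq_zero_of_forall_vertexSum_eq_zero hγ (fun e he => ?_) fun v hv => ?_
    · exact hd e fun h => (mem_edgeSet_fracGraph.1 h).2.1.ne' he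
    rw [vertexSum_eq_vertexSum_of_le fracGraph_le hd]
    rcases Nat.eq_zero_or_pos (F.degree v) with hdeg | hdeg
    · exact vertexSum_eq_zero_of_degree_eq_zero hdeg d
    obtain ⟨u, hvu⟩ := (F.degree_pos_iff_exists_adj v).1 hdeg
    calc vertexSum F d v = ∑ e ∈ F.incidenceFinset v, (γ e - 1 / 2) :=
          sum_congr rfl fun e he =>
            Set.indicator_of_mem ((SimpleGraph.mem_incidenceFinset ..).1 he).1 _
      _ = vertexSum F γ v - F.degree v * (1 / 2) := by
          rw [sum_sub_distrib, sum_const, nsmul_eq_mul, F.card_incidenceFinset_eq_degree,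
            vertexSum_apply]
      _ = 0 := by
          rw [vertexSum_fracGraph_eq_one hγ.1 hv hvu,
            (vertexSum_eq_one_and_degree_eq_two hγ hdeg).2]
          norm_num
  have heq : γ e - 1 / 2 = 0 := by
    rw [← Set.indicator_of_mem he fun e => γ e - 1 / 2]
    exact congrFun hzero e
  exact sub_eq_zero.1 heq

lemma odd_length_of_isCycle (hγ : γ ∈ (Γfec G).extremePoints ℝ) {w : V}
    {c : (suppGraph G γ).Walk w w} (hc : c.IsCycle) : Odd c.length := by
  by_contra heven
  rw [Nat.not_odd_iff_even] at heven
  refine alternatingVec_ne_zero (hc.mapLe suppGraph_le) ?_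
  refine eq_zero_of_forall_vertexSum_eq_zero hγ (fun e he => ?_) fun v _ => ?_
  · refine alternatingVec_of_notMem_edges _ fun hmem => ?_
    rw [SimpleGraph.Walk.edges_mapLe_eq_edges] at hmem
    exact (mem_edgeSet_suppGraph.1 (c.edges_subset_edgeSet hmem)).2.ne' he
  · rw [vertexSum_alternatingVec, SimpleGraph.Walk.length_map, heven.neg_one_pow]
    simp

lemma exists_isCycle_odd_of_fracGraph_adj (hγ : γ ∈ (Γfec G).extremePoints ℝ)
    (hxy : (fracGraph G γ).Adj x y) :
    ∃ c : (suppGraph G γ).Walk x x, c.IsCycle ∧ Odd c.length ∧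
      ∀ u v, (suppGraph G γ).Adj u v → (suppGraph G γ).Reachable x u → s(u, v) ∈ c.edges := by
  obtain ⟨c, hc, hedges⟩ := exists_isCycle_edges_of_isCycles (fracGraph_isCycles hγ)
    fracGraph_le_suppGraph (fun _ _ _ => fracGraph_adj_of_suppGraph_adj hγ) hxy
  exact ⟨c, hc, odd_length_of_isCycle hγ hc, hedges⟩

end FractionalEdgeCover

section Basic

variable [Fintype V] [DecidableEq V] {G : SimpleGraph V} {γ : Sym2 V → ℝ} {x y : V}

lemma isSubstarComponent_of_neighborSet_subset_of_not_fracGraph_adj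
    (hγ : γ ∈ (Γfec G).extremePoints ℝ) (hxy : (suppGraph G γ).Adj x y)
    (hfrac : ¬(fracGraph G γ).Adj x y) (hx : (suppGraph G γ).neighborSet x ⊆ {y}) {a : V}
    (ha : (suppGraph G γ).Reachable y a) : IsSubstarComponent (suppGraph G γ) a := by
  refine isSubstarComponent_of_neighborSet_subset (fun z hyz => ?_) ha
  rcases fracGraph_adj_or_eq_one hγ hyz with hyz_frac | ⟨-, hy | hz⟩
  · exact absurd (fracGraph_adj_of_suppGraph_adj hγ hyz_frac hxy.symm).symm hfrac
  · obtain rfl : x = z := hy hxy.symm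
    exact hx
  · exact hz

lemma isSubstarComponent_or_isOddCycleComponent (hγ : γ ∈ (Γfec G).extremePoints ℝ)
    (hxy : (suppGraph G γ).Adj x y) :
    IsSubstarComponent (suppGraph G γ) x ∨ IsOddCycleComponent (suppGraph G γ) x := by
  by_cases hfrac : (fracGraph G γ).Adj x y
  · obtain ⟨c, hc, hodd, hedges⟩ := exists_isCycle_odd_of_fracGraph_adj hγ hfrac
    exact .inr ⟨x, c, hc, hodd, .rfl, hedges⟩
  · left
    rcases ((fracGraph_adj_or_eq_one hγ hxy).resolve_left hfrac).2 with hx | hy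
    · exact isSubstarComponent_of_neighborSet_subset_of_not_fracGraph_adj hγ hxy hfrac hx
        hxy.symm.reachable
    · exact isSubstarComponent_of_neighborSet_subset_of_not_fracGraph_adj hγ hxy.symm
        (mt SimpleGraph.Adj.symm hfrac) hy .rfl

lemma eq_zero_or_eq_half_or_eq_one (hγ : γ ∈ (Γfec G).extremePoints ℝ) (e : Sym2 V) :
    γ e = 0 ∨ γ e = 1 / 2 ∨ γ e = 1 := by
  induction e with
  | _ x y =>
    rcases (hγ.1.1 s(x, y)).eq_or_lt with hzero | hpos
    · exact .inl hzero.symm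
    · have hxy := suppGraph_adj_of_pos hγ.1 hpos
      exact .inr ((fracGraph_adj_or_eq_one hγ hxy).imp (eq_half_of_mem_edgeSet_fracGraph hγ) (·.1))

lemma fracGraph_adj_of_mem_edges_of_isCycle (hγ : γ ∈ (Γfec G).extremePoints ℝ) {w : V}
    {c : (suppGraph G γ).Walk w w} (hc : c.IsCycle) (hmem : s(x, y) ∈ c.edges) :
    (fracGraph G γ).Adj x y := by
  refine (fracGraph_adj_or_eq_one hγ (c.adj_of_mem_edges hmem)).resolve_right ?_
  rintro ⟨-, hx | hy⟩
  · exact notMem_edges_of_isCycle_of_neighborSet_subset hx hc hmem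
  · exact notMem_edges_of_isCycle_of_neighborSet_subset hy hc (Sym2.eq_swap ▸ hmem)

lemma eq_half_iff_exists_isCycle_odd (hγ : γ ∈ (Γfec G).extremePoints ℝ) (e : Sym2 V) :
    γ e = 1 / 2 ↔ ∃ (w : V) (c : (suppGraph G γ).Walk w w),
      c.IsCycle ∧ Odd c.length ∧ e ∈ c.edges := by
  induction e with
  | _ x y =>
    constructor
    · intro hhalf
      have hxy : (suppGraph G γ).Adj x y := suppGraph_adj_of_pos hγ.1 (by rw [hhalf]; norm_num)
      obtain ⟨c, hc, hodd, hedges⟩ := exists_isCycle_odd_of_fracGraph_adj hγ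
        (fracGraph_adj.2 ⟨hxy, by rw [hhalf]; norm_num⟩)
      exact ⟨x, c, hc, hodd, hedges x y hxy .rfl⟩
    · rintro ⟨w, c, hc, -, hmem⟩
      exact eq_half_of_mem_edgeSet_fracGraph hγ (fracGraph_adj_of_mem_edges_of_isCycle hγ hc hmem)

theorem extremePoints_Γfec_subset_Γbfec : (Γfec G).extremePoints ℝ ⊆ Γbfec G :=
  fun _ hγ => ⟨hγ.1, eq_zero_or_eq_half_or_eq_one hγ,
    fun _ _ => isSubstarComponent_or_isOddCycleComponent hγ,
    fun e _ => eq_half_iff_exists_isCycle_odd hγ e⟩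

end Basic

lemma sum_edgeFinset_mul_eq_dotProduct [Fintype V] {G : SimpleGraph V} {γ ρ : Sym2 V → ℝ}
    (hρ : ∀ e ∉ G.edgeSet, ρ e = 0) :
    ∑ e ∈ G.edgeFinset, γ e * ρ e = ρ ⬝ᵥ γ := by
  rw [dotProduct_comm]
  refine sum_subset (subset_univ _) fun e _ he => ?_
  rw [hρ e (by simpa using he), mul_zero]

/-- A density is admissible for the family of fractional edge covers iff it is
admissible for the family of basic fractional edge covers. -/
theorem adm_fec_eq_adm_bfec [Fintype V] [DecidableEq V] (G : SimpleGraph V)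
    (hiso : ∀ v : V, ∃ u, G.Adj v u) :
    Adm G (Γfec G) = Adm G (Γbfec G) := by
  refine Set.Subset.antisymm ?_ ?_
  · rintro ρ ⟨hρ0, hρE, hρ⟩
    exact ⟨hρ0, hρE, fun γ hγ => hρ γ hγ.1⟩
  · rintro ρ ⟨hρ0, hρE, hρ⟩
    refine ⟨hρ0, hρE, fun γ hγ => ?_⟩
    rw [sum_edgeFinset_mul_eq_dotProduct hρE]
    refine le_dotProduct_of_forall_mem_extremePoints isClosed_Γfec (fun γ' hγ' => hγ'.1) hρ0
      (fun γ' hγ' => ?_) hγ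
    rw [← sum_edgeFinset_mul_eq_dotProduct hρE]
    exact hρ γ' (extremePoints_Γfec_subset_Γbfec hγ')
end
end

section
/- Let G be a finite simple graph with no isolated vertices and positive edge weights σ, let Γ_ec be the family of edge covers of G and Γ_fec the family of fractional edge covers of G. Then for every p ∈ [1,∞): (3/4)^p · Mod_{p,σ}(Γ_fec) ≤ Mod_{p,σ}(Γ_ec) ≤ Mod_{p,σ}(Γ_fec). -/
open Finset

noncomputable section
open scoped Classical

variable {V : Type*}

/-!
Everything rests on the bound `3 / 4 ≤ ∑ e, γ e * ρ e` for `ρ` admissible for the edge covers and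
`γ` a fractional edge cover. Dividing each `γ(vu)` by the larger of the two total weights at `v`
and `u` (as in a Metropolis chain) and putting the missing mass on the diagonal turns `γ` into a
symmetric doubly stochastic matrix, a convex combination of permutation matrices by Birkhoff's
theorem. Charge a permutation `π` the amount `ρ(v, π v) / 2` at each moved vertex `v`, and the
cheapest edge at each fixed one. On average this costs at most `∑ e, γ e * ρ e`, whereas every
permutation in the combination costs at least `3 / 4`: colour the vertices with three colours so
that `π` moves no vertex to one of its own colour; for each colour, the edges chosen by the
vertices that are fixed or have one of the other two colours form an edge cover. The three covers
use the edge of a moved vertex twice and that of a fixed vertex three times, in both cases at most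
four times its charge.
-/

section DoublyStochastic

variable {ι R : Type*} [Fintype ι] [DecidableEq ι] [Field R] [LinearOrder R] [IsStrictOrderedRing R]

lemma le_sum_mul_of_mem_doublyStochastic {A : Matrix ι ι R} (hA : A ∈ doublyStochastic R ι)
    (K : ι → ι → R) {t : R}
    (h : ∀ π : Equiv.Perm ι, (∀ i, A i (π i) ≠ 0) → t ≤ ∑ i, K i (π i)) :
    t ≤ ∑ i, ∑ j, A i j * K i j := by
  obtain ⟨w, hw0, hw1, rfl⟩ := exists_eq_sum_perm_of_mem_doublyStochastic hA
  have entry (i j : ι) : (∑ π : Equiv.Perm ι, w π • π.permMatrix R) i j =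
      ∑ π : Equiv.Perm ι, if π i = j then w π else 0 := by
    simp [Matrix.sum_apply, Equiv.Perm.permMatrix, PEquiv.toMatrix_apply, eq_comm]
  simp only [entry] at h ⊢
  have support {π : Equiv.Perm ι} (hπ : w π ≠ 0) (i : ι) :
      (∑ τ : Equiv.Perm ι, if τ i = π i then w τ else 0) ≠ 0 := by
    refine (Finset.sum_pos' (fun τ _ => ?_) ⟨π, mem_univ π, ?_⟩).ne'
    · split_ifs
      exacts [hw0 τ, le_rfl]
    · simpa using (hw0 π).lt_of_ne' hπ
  calc
    t = ∑ π, w π * t := by rw [← Finset.sum_mul, hw1, one_mul]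
    _ ≤ ∑ π : Equiv.Perm ι, w π * ∑ i, K i (π i) := by
      refine Finset.sum_le_sum fun π _ => ?_
      by_cases hπ : w π = 0
      · simp [hπ]
      · exact mul_le_mul_of_nonneg_left (h π (support hπ)) (hw0 π)
    _ = ∑ i, ∑ π : Equiv.Perm ι, w π * K i (π i) := by
      simp only [Finset.mul_sum]
      exact Finset.sum_comm
    _ = ∑ i, ∑ j, (∑ π : Equiv.Perm ι, if π i = j then w π else 0) * K i j := by
      refine Finset.sum_congr rfl fun i _ => ?_
      simp only [Finset.sum_mul, ite_mul, zero_mul]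
      rw [Finset.sum_comm]
      simp

end DoublyStochastic

section LazyCompletion

variable {ι R : Type*} [Fintype ι] [DecidableEq ι] [Ring R]

/-- The lazy completion of a substochastic matrix: the mass missing from each row is put on the
diagonal, so that a symmetric matrix becomes doubly stochastic. -/
def lazyCompletion (B : Matrix ι ι R) : Matrix ι ι R :=
  B + Matrix.diagonal fun i => 1 - ∑ j, B i j

lemma lazyCompletion_apply_of_ne (B : Matrix ι ι R) {i j : ι} (hij : i ≠ j) :
    lazyCompletion B i j = B i j := by
  simp [lazyCompletion, hij]

lemma sum_lazyCompletion (B : Matrix ι ι R) (i : ι) : ∑ j, lazyCompletion B i j = 1 := by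
  simp [lazyCompletion, Matrix.diagonal_apply, Finset.sum_add_distrib]

lemma lazyCompletion_isSymm {B : Matrix ι ι R} (hB : B.IsSymm) : (lazyCompletion B).IsSymm :=
  hB.add (Matrix.isSymm_diagonal _)

lemma lazyCompletion_mem_doublyStochastic [PartialOrder R] [IsOrderedRing R] {B : Matrix ι ι R}
    (hsymm : B.IsSymm) (h0 : ∀ i j, 0 ≤ B i j) (h1 : ∀ i, ∑ j, B i j ≤ 1) :
    lazyCompletion B ∈ doublyStochastic R ι := by
  refine mem_doublyStochastic_iff_sum.2 ⟨fun i j => ?_, sum_lazyCompletion B, fun j => ?_⟩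
  · refine add_nonneg (h0 i j) ?_
    rw [Matrix.diagonal_apply]
    split_ifs
    exacts [sub_nonneg.2 (h1 i), le_rfl]
  · calc
      ∑ i, lazyCompletion B i j = ∑ i, lazyCompletion B j i :=
        Finset.sum_congr rfl fun i _ => (lazyCompletion_isSymm hsymm).apply j i
      _ = 1 := sum_lazyCompletion B j

end LazyCompletion

section Metropolis

variable {ι R : Type*} [Fintype ι] [Field R] [LinearOrder R]

/-- The off-diagonal transition matrix of the Metropolis chain with edge weights `g` and uniform
stationary distribution; its holding probabilities are supplied by `lazyCompletion`. -/
def metropolis (g : Matrix ι ι R) : Matrix ι ι R :=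
  Matrix.of fun i j => g i j / max (∑ k, g i k) (∑ k, g j k)

lemma metropolis_isSymm {g : Matrix ι ι R} (hg : g.IsSymm) : (metropolis g).IsSymm := by
  ext i j
  simp only [metropolis, Matrix.transpose_apply, Matrix.of_apply, hg.apply, max_comm]

variable [IsStrictOrderedRing R] {g : Matrix ι ι R}

lemma metropolis_nonneg (h0 : ∀ i j, 0 ≤ g i j) (i j : ι) : 0 ≤ metropolis g i j :=
  div_nonneg (h0 i j) (le_max_of_le_left (Finset.sum_nonneg fun k _ => h0 i k))

lemma metropolis_le_div (h0 : ∀ i j, 0 ≤ g i j) {i : ι} (hi : 0 < ∑ k, g i k) (j : ι) :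
    metropolis g i j ≤ g i j / ∑ k, g i k :=
  div_le_div_of_nonneg_left (h0 i j) hi (le_max_left _ _)

lemma sum_metropolis_le_one (h0 : ∀ i j, 0 ≤ g i j) {i : ι} (hi : 0 < ∑ k, g i k) :
    ∑ j, metropolis g i j ≤ 1 :=
  calc
    ∑ j, metropolis g i j ≤ ∑ j, g i j / ∑ k, g i k :=
      Finset.sum_le_sum fun j _ => metropolis_le_div h0 hi j
    _ = 1 := by rw [← Finset.sum_div, div_self hi.ne']

lemma div_add_div_sub_div_max_le {x a b : R} (hx : 0 ≤ x) (ha : 1 ≤ a) (hb : 1 ≤ b) :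
    x / a + x / b - x / max a b ≤ x := by
  rcases le_total a b with hab | hba
  · simpa only [max_eq_right hab, add_sub_cancel_right] using div_le_self hx ha
  · simpa only [max_eq_left hba, add_sub_cancel_left] using div_le_self hx hb

end Metropolis

section MoveCost

variable {ι R : Type*} [Fintype ι] [DecidableEq ι] [Field R]

/-- The charge of a permutation at `i` when it sends `i` to `j`: the rest cost `t i` if it fixes
`i`, and half the edge weight `r i j` otherwise. -/
def moveCost (t : ι → R) (r : Matrix ι ι R) (i j : ι) : R :=
  if i = j then t i else r i j / 2

variable [LinearOrder R] [IsStrictOrderedRing R] {t : ι → R} {r g B P : Matrix ι ι R}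

lemma sum_lazyCompletion_mul_moveCost_le {i : ι} (hBP : ∀ j, B i j ≤ P i j)
    (hP : ∑ j, P i j = 1) (hBi : B i i = 0) (ht : ∀ j, B i j < P i j → t i ≤ r i j) :
    ∑ j, lazyCompletion B i j * moveCost t r i j ≤ ∑ j, (P i j - B i j / 2) * r i j := by
  have rest (j : ι) : (P i j - B i j) * t i ≤ (P i j - B i j) * r i j := by
    rcases (hBP j).eq_or_lt with hj | hj
    · simp [hj]
    · exact mul_le_mul_of_nonneg_left (ht j hj) (sub_nonneg.2 hj.le)
  have entry (j : ι) : lazyCompletion B i j * moveCost t r i j =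
      B i j * (r i j / 2) + if i = j then (1 - ∑ k, B i k) * t i else 0 := by
    by_cases hij : i = j
    · subst hij
      simp [lazyCompletion, moveCost, hBi]
    · simp [lazyCompletion_apply_of_ne, moveCost, hij]
  calc
    ∑ j, lazyCompletion B i j * moveCost t r i j
      = ∑ j, B i j * (r i j / 2) + (1 - ∑ k, B i k) * t i := by
        simp [entry, Finset.sum_add_distrib]
    _ = ∑ j, (B i j * (r i j / 2) + (P i j - B i j) * t i) := by
        rw [← hP, ← Finset.sum_sub_distrib, Finset.sum_mul, Finset.sum_add_distrib]
    _ ≤ ∑ j, (P i j - B i j / 2) * r i j :=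
        Finset.sum_le_sum fun j _ => by linarith [rest j]

lemma two_mul_sum_lazyCompletion_metropolis_mul_moveCost_le (hg : g.IsSymm)
    (h0 : ∀ i j, 0 ≤ g i j) (hdiag : ∀ i, g i i = 0) (h1 : ∀ i, 1 ≤ ∑ k, g i k)
    (hr : r.IsSymm) (hr0 : ∀ i j, 0 ≤ r i j) (ht : ∀ i j, g i j ≠ 0 → t i ≤ r i j) :
    2 * ∑ i, ∑ j, lazyCompletion (metropolis g) i j * moveCost t r i j ≤
      ∑ i, ∑ j, g i j * r i j := by
  set d : ι → R := fun i => ∑ k, g i k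
  set B := metropolis g with hB
  have hpos (i : ι) : 0 < d i := zero_lt_one.trans_le (h1 i)
  have row (i : ι) : ∑ j, lazyCompletion B i j * moveCost t r i j ≤
      ∑ j, (g i j / d i - B i j / 2) * r i j := by
    refine sum_lazyCompletion_mul_moveCost_le (P := fun i j => g i j / d i)
      (metropolis_le_div h0 (hpos i)) ?_ ?_ fun j hj => ht i j fun hgij => ?_
    · rw [← Finset.sum_div, div_self (hpos i).ne']
    · simp [hB, metropolis, hdiag]
    · simp [hB, metropolis, hgij] at hj
  have reverse : ∑ i, ∑ j, (g i j / d i - B i j / 2) * r i j =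
      ∑ i, ∑ j, (g i j / d j - B i j / 2) * r i j := by
    rw [Finset.sum_comm]
    simp only [hg.apply, hr.apply, (metropolis_isSymm hg).apply, hB]
  calc
    2 * ∑ i, ∑ j, lazyCompletion B i j * moveCost t r i j
      ≤ 2 * ∑ i, ∑ j, (g i j / d i - B i j / 2) * r i j :=
        mul_le_mul_of_nonneg_left (Finset.sum_le_sum fun i _ => row i) zero_le_two
    _ = ∑ i, ∑ j, (g i j / d i + g i j / d j - B i j) * r i j := by
        nth_rw 1 [two_mul, reverse]
        simp only [← Finset.sum_add_distrib]
        exact Finset.sum_congr rfl fun i _ => Finset.sum_congr rfl fun j _ => by ring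
    _ ≤ ∑ i, ∑ j, g i j * r i j := by
        gcongr with i _ j
        · exact hr0 i j
        · exact div_add_div_sub_div_max_le (h0 i j) (h1 i) (h1 j)

end MoveCost

lemma exists_fin_three_coloring_perm_on {α : Type*} (π : Equiv.Perm α) (s : Finset α) :
    ∃ c : α → Fin 3, ∀ a ∈ s, π a ∈ s → π a ≠ a → c a ≠ c (π a) := by
  induction s using Finset.induction_on with
  | empty => exact ⟨fun _ => 0, by simp⟩
  | insert b s _ ih =>
    obtain ⟨c, hc⟩ := ih
    have third_color : ∀ x y : Fin 3, ∃ z, z ≠ x ∧ z ≠ y := by decide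
    obtain ⟨z, hz_succ, hz_pred⟩ := third_color (c (π b)) (c (π.symm b))
    refine ⟨Function.update c b z, fun a ha hπa hne => ?_⟩
    by_cases hab : a = b
    · subst hab
      simpa [Function.update_of_ne hne] using hz_succ
    · by_cases hπab : π a = b
      · rw [π.symm_apply_eq.2 hπab.symm] at hz_pred
        simpa [hab, hπab] using hz_pred.symm
      · simpa [hab, hπab] using
          hc a (mem_of_mem_insert_of_ne ha hab) (mem_of_mem_insert_of_ne hπa hπab) hne

lemma exists_fin_three_coloring_perm {α : Type*} [Finite α] (π : Equiv.Perm α) :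
    ∃ c : α → Fin 3, ∀ a, π a ≠ a → c a ≠ c (π a) := by
  have := Fintype.ofFinite α
  simpa using exists_fin_three_coloring_perm_on π Finset.univ

section EdgeSums

variable {M : Type*} [AddCommMonoid M] [Fintype V] {G : SimpleGraph V} {f : Sym2 V → M}

lemma sum_incidenceFinset_eq_sum [DecidableEq V] (hf : ∀ e ∉ G.edgeSet, f e = 0) (v : V) :
    ∑ e ∈ G.incidenceFinset v, f e = ∑ u, f s(v, u) := by
  have image_subset : G.incidenceFinset v ⊆ univ.image fun u => s(v, u) := by
    intro e he
    obtain ⟨-, u, rfl⟩ := (G.mem_incidenceFinset v e).1 he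
    exact mem_image_of_mem _ (mem_univ u)
  rw [Finset.sum_subset image_subset,
    Finset.sum_image fun _ _ _ _ h => Sym2.congr_right.1 h]
  intro e he he'
  obtain ⟨u, -, rfl⟩ := mem_image.1 he
  exact hf _ fun hadj => he' ((G.mem_incidenceFinset v _).2 ⟨hadj, Sym2.mem_mk_left v u⟩)

lemma sum_sum_incidenceFinset [DecidableEq V] (G : SimpleGraph V) (f : Sym2 V → M) :
    ∑ v, ∑ e ∈ G.incidenceFinset v, f e = 2 • ∑ e ∈ G.edgeFinset, f e := by
  simp only [G.incidenceFinset_eq_filter, Finset.sum_filter]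
  rw [Finset.sum_comm, Finset.smul_sum]
  refine Finset.sum_congr rfl fun e he => ?_
  have two_ends : #{v | v ∈ e} = 2 := by
    rw [← Sym2.card_toFinset_of_not_isDiag e
      (G.not_isDiag_of_mem_edgeSet (SimpleGraph.mem_edgeFinset.1 he))]
    congr 1
    ext v
    simp
  rw [← Finset.sum_filter, Finset.sum_const, two_ends]

lemma sum_sum_eq_two_nsmul_sum_edgeFinset (hf : ∀ e ∉ G.edgeSet, f e = 0) :
    ∑ v, ∑ u, f s(v, u) = 2 • ∑ e ∈ G.edgeFinset, f e := by
  simp only [← sum_sum_incidenceFinset, sum_incidenceFinset_eq_sum hf]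

end EdgeSums

section EdgeCovers

variable [Fintype V] [DecidableEq V] {G : SimpleGraph V} {ρ γ : Sym2 V → ℝ}

lemma Γec_subset_Γfec (G : SimpleGraph V) : Γec G ⊆ Γfec G := by
  rintro _ ⟨C, ⟨hCG, hC⟩, rfl⟩
  have indicator_nonneg (e : Sym2 V) : (0 : ℝ) ≤ if e ∈ C then 1 else 0 := by
    split_ifs <;> norm_num
  refine ⟨indicator_nonneg, fun e he => if_neg fun heC => he (hCG heC), fun v => ?_⟩
  obtain ⟨e, heC, hve⟩ := hC v
  have he : e ∈ G.incidenceFinset v := (G.mem_incidenceFinset v e).2 ⟨hCG heC, hve⟩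
  simpa only [if_pos heC] using
    Finset.single_le_sum (f := fun e => if e ∈ C then (1 : ℝ) else 0)
      (fun e _ => indicator_nonneg e) he

lemma one_le_sum_of_isEdgeCover (hρ : ρ ∈ Adm G (Γec G)) {C : Finset (Sym2 V)}
    (hC : IsEdgeCover G C) : 1 ≤ ∑ e ∈ C, ρ e := by
  have inter_eq : G.edgeFinset ∩ C = C :=
    Finset.inter_eq_right.2 fun e he => SimpleGraph.mem_edgeFinset.2 (hC.1 he)
  simpa [inter_eq] using hρ.2.2 _ ⟨C, hC, rfl⟩

lemma one_le_sum_of_forall_notMem_exists_eq (hρ : ρ ∈ Adm G (Γec G)) {s : Finset V} {f : V → V}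
    (hadj : ∀ v ∈ s, G.Adj v (f v)) (hcov : ∀ v ∉ s, ∃ u ∈ s, f u = v) :
    1 ≤ ∑ v ∈ s, ρ s(v, f v) := by
  have cover : IsEdgeCover G (s.image fun v => s(v, f v)) := by
    refine ⟨fun e he => ?_, fun v => ?_⟩
    · obtain ⟨v, hv, rfl⟩ := mem_image.1 he
      exact hadj v hv
    · by_cases hv : v ∈ s
      · exact ⟨_, mem_image_of_mem _ hv, Sym2.mem_mk_left _ _⟩
      · obtain ⟨u, hu, rfl⟩ := hcov v hv
        exact ⟨_, mem_image_of_mem _ hu, Sym2.mem_mk_right _ _⟩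
  exact (one_le_sum_of_isEdgeCover hρ cover).trans
    (Finset.sum_image_le_of_nonneg fun _ _ => hρ.1 _)

lemma one_le_sum_filter_fixed_or_color_ne {κ : Type*} [DecidableEq κ] (hρ : ρ ∈ Adm G (Γec G))
    {π : Equiv.Perm V} {f : V → V} (hadj : ∀ v, G.Adj v (f v)) (hf : ∀ v, π v ≠ v → f v = π v)
    {c : V → κ} (hc : ∀ v, π v ≠ v → c v ≠ c (π v)) (i : κ) :
    1 ≤ ∑ v with π v = v ∨ c v ≠ i, ρ s(v, f v) := by
  refine one_le_sum_of_forall_notMem_exists_eq hρ (fun v _ => hadj v) fun v hv => ?_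
  simp only [mem_filter_univ, not_or, not_not] at hv
  obtain ⟨u, rfl⟩ := π.surjective v
  have hu : π u ≠ u := fun h => hv.1 (congrArg π h)
  exact ⟨u, (mem_filter_univ u).2 (.inr (hv.2 ▸ hc u hu)), hf u hu⟩

lemma three_quarters_le_sum_moveCost_perm (hρ : ρ ∈ Adm G (Γec G)) {m : V → V}
    (hm : ∀ v, G.Adj v (m v)) {π : Equiv.Perm V} (hπ : ∀ v, π v ≠ v → G.Adj v (π v)) :
    3 / 4 ≤ ∑ v, moveCost (fun v => ρ s(v, m v)) (fun v u => ρ s(v, u)) v (π v) := by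
  obtain ⟨c, hc⟩ := exists_fin_three_coloring_perm π
  let f : V → V := fun v => if π v = v then m v else π v
  have f_adj (v : V) : G.Adj v (f v) := by
    by_cases hv : π v = v
    · simpa only [f, if_pos hv] using hm v
    · simpa only [f, if_neg hv] using hπ v hv
  have color_class (i : Fin 3) : 1 ≤ ∑ v with π v = v ∨ c v ≠ i, ρ s(v, f v) :=
    one_le_sum_filter_fixed_or_color_ne hρ f_adj (fun _ hv => if_neg hv) hc i
  have charge (v : V) : ∑ i, (if π v = v ∨ c v ≠ i then ρ s(v, f v) else 0) ≤
      4 * moveCost (fun v => ρ s(v, m v)) (fun v u => ρ s(v, u)) v (π v) := by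
    by_cases hv : π v = v
    · simp only [hv, true_or, if_true, f, moveCost, sum_const, card_univ, Fintype.card_fin,
        nsmul_eq_mul]
      gcongr
      · exact hρ.1 _
      · norm_num
    · have two_colors : #{i | c v ≠ i} = 2 := by
        simp [Finset.filter_ne, Finset.card_erase_of_mem]
      simp only [hv, false_or, if_false, f, moveCost, Ne.symm hv, ← Finset.sum_filter, sum_const,
        two_colors, nsmul_eq_mul]
      linarith
  have total : (3 : ℝ) ≤
      4 * ∑ v, moveCost (fun v => ρ s(v, m v)) (fun v u => ρ s(v, u)) v (π v) :=
    calc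
      (3 : ℝ) = ∑ _i : Fin 3, 1 := by simp
      _ ≤ ∑ i, ∑ v with π v = v ∨ c v ≠ i, ρ s(v, f v) :=
        Finset.sum_le_sum fun i _ => color_class i
      _ = ∑ v, ∑ i, if π v = v ∨ c v ≠ i then ρ s(v, f v) else 0 := by
        simp only [Finset.sum_filter]
        exact Finset.sum_comm
      _ ≤ 4 * ∑ v, moveCost (fun v => ρ s(v, m v)) (fun v u => ρ s(v, u)) v (π v) := by
        rw [Finset.mul_sum]
        exact Finset.sum_le_sum fun v _ => charge v
  linarith

lemma exists_adj_of_mem_Γfec (hγ : γ ∈ Γfec G) (v : V) : ∃ u, G.Adj v u := by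
  by_contra! isolated
  have hv : (1 : ℝ) ≤ 0 := by
    simpa [sum_incidenceFinset_eq_sum hγ.2.1, hγ.2.1, isolated] using hγ.2.2 v
  exact hv.not_gt one_pos

theorem three_quarters_le_sum_mul_of_mem_Γfec (hρ : ρ ∈ Adm G (Γec G)) (hγ : γ ∈ Γfec G) :
    3 / 4 ≤ ∑ e ∈ G.edgeFinset, γ e * ρ e := by
  have hmin (v : V) : ∃ u, G.Adj v u ∧ ∀ u', G.Adj v u' → ρ s(v, u) ≤ ρ s(v, u') :=
    Set.exists_min_image {u | G.Adj v u} (fun u => ρ s(v, u)) (Set.toFinite _)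
      (exists_adj_of_mem_Γfec hγ v)
  choose m hm hm_le using hmin
  obtain ⟨hγ0, hγG, hγ1⟩ := hγ
  let g : Matrix V V ℝ := fun v u => γ s(v, u)
  let r : Matrix V V ℝ := fun v u => ρ s(v, u)
  have adj_of_ne {v u : V} (h : g v u ≠ 0) : G.Adj v u := not_imp_comm.1 (hγG s(v, u)) h
  have hg : g.IsSymm := Matrix.IsSymm.ext fun v u => congrArg γ Sym2.eq_swap
  have hr : r.IsSymm := Matrix.IsSymm.ext fun v u => congrArg ρ Sym2.eq_swap
  have g_nonneg (v u : V) : 0 ≤ g v u := hγ0 _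
  have one_le_row (v : V) : 1 ≤ ∑ u, g v u := (hγ1 v).trans_eq (sum_incidenceFinset_eq_sum hγG v)
  have row_pos (v : V) : 0 < ∑ u, g v u := one_pos.trans_le (one_le_row v)
  have birkhoff : 3 / 4 ≤ ∑ v, ∑ u,
      lazyCompletion (metropolis g) v u * moveCost (fun v => ρ s(v, m v)) r v u := by
    refine le_sum_mul_of_mem_doublyStochastic (lazyCompletion_mem_doublyStochastic
      (metropolis_isSymm hg) (metropolis_nonneg g_nonneg)
      fun v => sum_metropolis_le_one g_nonneg (row_pos v)) _ fun π hπ => ?_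
    refine three_quarters_le_sum_moveCost_perm hρ hm fun v hv => adj_of_ne fun hzero => hπ v ?_
    rw [lazyCompletion_apply_of_ne _ hv.symm, metropolis, Matrix.of_apply, hzero, zero_div]
  have transport := two_mul_sum_lazyCompletion_metropolis_mul_moveCost_le
    (t := fun v => ρ s(v, m v)) hg g_nonneg (fun v => hγG _ G.irrefl) one_le_row hr
    (fun _ _ => hρ.1 _) fun v u hvu => hm_le v u (adj_of_ne hvu)
  have edge_sum : ∑ v, ∑ u, g v u * r v u = 2 • ∑ e ∈ G.edgeFinset, γ e * ρ e :=
    sum_sum_eq_two_nsmul_sum_edgeFinset (f := fun e => γ e * ρ e) fun e he => by simp [hγG e he]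
  rw [nsmul_eq_mul, Nat.cast_ofNat] at edge_sum
  linarith

end EdgeCovers

section Modulus

variable [Fintype V] [DecidableEq V] {G : SimpleGraph V} {σ ρ : Sym2 V → ℝ}
  {Γ Γ' : Set (Sym2 V → ℝ)} {c : ℝ}

lemma Adm_anti (h : Γ ⊆ Γ') : Adm G Γ' ⊆ Adm G Γ :=
  fun _ hρ => ⟨hρ.1, hρ.2.1, fun γ hγ => hρ.2.2 γ (h hγ)⟩

lemma inv_smul_mem_Adm (hρ : ρ ∈ Adm G Γ) (hc : 0 < c)
    (h : ∀ γ ∈ Γ', c ≤ ∑ e ∈ G.edgeFinset, γ e * ρ e) : c⁻¹ • ρ ∈ Adm G Γ' := by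
  refine ⟨fun e => mul_nonneg (inv_pos.2 hc).le (hρ.1 e), fun e he => ?_, fun γ hγ => ?_⟩
  · simp [hρ.2.1 e he]
  · calc
      1 = c⁻¹ * c := (inv_mul_cancel₀ hc.ne').symm
      _ ≤ c⁻¹ * ∑ e ∈ G.edgeFinset, γ e * ρ e :=
        mul_le_mul_of_nonneg_left (h γ hγ) (inv_pos.2 hc).le
      _ = ∑ e ∈ G.edgeFinset, γ e * (c⁻¹ • ρ) e := by
        simp only [Finset.mul_sum, Pi.smul_apply, smul_eq_mul, mul_left_comm]

lemma energy_smul (p : ℝ) (hc : 0 ≤ c) (hρ : ∀ e, 0 ≤ ρ e) :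
    energy p σ G (c • ρ) = c ^ p * energy p σ G ρ := by
  simp only [energy, Finset.mul_sum, Pi.smul_apply, smul_eq_mul]
  refine Finset.sum_congr rfl fun e _ => ?_
  rw [Real.mul_rpow hc (hρ e)]
  ring

lemma bddBelow_energy_image_Adm (hσ : ∀ e ∈ G.edgeSet, 0 ≤ σ e) (p : ℝ) :
    BddBelow (energy p σ G '' Adm G Γ) := by
  refine ⟨0, ?_⟩
  rintro _ ⟨ρ, hρ, rfl⟩
  exact Finset.sum_nonneg fun e he =>
    mul_nonneg (hσ e (SimpleGraph.mem_edgeFinset.1 he)) (Real.rpow_nonneg (hρ.1 e) p)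

theorem Modulus_bounds_of_le_sum_mul (hσ : ∀ e ∈ G.edgeSet, 0 ≤ σ e) (p : ℝ) (hc : 0 < c)
    (hΓ : Γ ⊆ Γ') (h : ∀ ρ ∈ Adm G Γ, ∀ γ ∈ Γ', c ≤ ∑ e ∈ G.edgeFinset, γ e * ρ e) :
    c ^ p * Modulus p σ G Γ' ≤ Modulus p σ G Γ ∧ Modulus p σ G Γ ≤ Modulus p σ G Γ' := by
  have scale {ρ : Sym2 V → ℝ} (hρ : ρ ∈ Adm G Γ) : c⁻¹ • ρ ∈ Adm G Γ' :=
    inv_smul_mem_Adm hρ hc (h ρ hρ)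
  rcases (Adm G Γ).eq_empty_or_nonempty with hempty | hne
  · have hempty' : Adm G Γ' = ∅ := Set.subset_empty_iff.1 (hempty ▸ Adm_anti hΓ)
    simp [Modulus, hempty, hempty']
  have hne' : (Adm G Γ').Nonempty := hne.elim fun _ hρ => ⟨_, scale hρ⟩
  refine ⟨le_csInf (hne.image _) ?_, csInf_le_csInf (bddBelow_energy_image_Adm hσ p)
    (hne'.image _) (Set.image_mono (Adm_anti hΓ))⟩
  rintro _ ⟨ρ, hρ, rfl⟩
  calc
    c ^ p * Modulus p σ G Γ' ≤ c ^ p * energy p σ G (c⁻¹ • ρ) :=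
      mul_le_mul_of_nonneg_left
        (csInf_le (bddBelow_energy_image_Adm hσ p) ⟨_, scale hρ, rfl⟩)
        (Real.rpow_nonneg hc.le p)
    _ = energy p σ G ρ := by
      rw [energy_smul p (inv_pos.2 hc).le hρ.1, ← mul_assoc,
        ← Real.mul_rpow hc.le (inv_pos.2 hc).le, mul_inv_cancel₀ hc.ne', Real.one_rpow, one_mul]

end Modulus

theorem mod_ec_fec_bounds_general [Fintype V] [DecidableEq V] (G : SimpleGraph V)
    (σ : Sym2 V → ℝ) (hσ : ∀ e ∈ G.edgeSet, 0 ≤ σ e) (p : ℝ) :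
    (3 / 4 : ℝ) ^ p * Modulus p σ G (Γfec G) ≤ Modulus p σ G (Γec G) ∧
    Modulus p σ G (Γec G) ≤ Modulus p σ G (Γfec G) :=
  Modulus_bounds_of_le_sum_mul hσ p (by norm_num) (Γec_subset_Γfec G)
    fun _ hρ _ hγ => three_quarters_le_sum_mul_of_mem_Γfec hρ hγ

/-- `(3/4)^p Mod_{p,σ}(Γ_fec) ≤ Mod_{p,σ}(Γ_ec) ≤ Mod_{p,σ}(Γ_fec)` for `p ∈ [1,∞)`. -/
theorem mod_ec_fec_bounds [Fintype V] [DecidableEq V] (G : SimpleGraph V)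
    (hiso : ∀ v : V, ∃ u, G.Adj v u) (σ : Sym2 V → ℝ) (hσ : ∀ e, 0 < σ e)
    (p : ℝ) (hp : 1 ≤ p) :
    (3 / 4 : ℝ) ^ p * Modulus p σ G (Γfec G) ≤ Modulus p σ G (Γec G) ∧
    Modulus p σ G (Γec G) ≤ Modulus p σ G (Γfec G) :=
  mod_ec_fec_bounds_general G σ (fun e _ => (hσ e).le) p
end
end
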